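/- Let f(z) = z + Σ_{n≥2} a_n z^n and g(z) = z + Σ_{n≥2} b_n z^n be analytic on the unit disk 𝔻, with f and g nonvanishing on the punctured disk 0 < |z| < 1, and suppose |a_n| ≤ 1 and |b_n| ≤ 1 for all n ≥ 2. Then the function F(z) = z^3/(f(z)g(z)) satisfies |F'(z)(z/F(z))^2 − 1| < 1 for every z with 0 < |z| < 1/3; in particular F belongs to the class 𝒰 in the disk |z| < 1/3. -/

import Mathlib

/-!
Write `f z = z (1 + u z)` and `g z = z (1 + v z)`. Then `z / F z = (1 + u)(1 + v) =: h`, so that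
`F = z / h` and `F' (z / F)² = h - z h'`. With `A = u - z u'` and `B = v - z v'` this gives
`U_F = A + B - u v + A v + B u`.

Put `r = ‖z‖` and `s = r / (1 - r)`. Comparing power series with `∑ r ^ n` and `∑ (n - 1) r ^ n`
yields `‖u‖, ‖v‖ ≤ s` and `‖A‖, ‖B‖ ≤ s ^ 2` (`series_bounds`), whence
`‖U_F‖ ≤ 3 s ^ 2 + 2 s ^ 3`. For `r < 1 / 3` one has `s < 1 / 2`, and `3 / 4 + 2 / 8 = 1`.
-/

/-- Termwise differentiation of a power series with coefficients bounded by one. -/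
lemma hasDerivAt_series (f : ℂ → ℂ) (a : ℕ → ℂ)
    (hf : ∀ z ∈ Metric.ball (0:ℂ) 1, HasSum (fun n : ℕ => a n * z ^ n) (f z))
    (hA : ∀ n : ℕ, ‖a n‖ ≤ 1) (z : ℂ) (hz1 : ‖z‖ < 1) :
    ∃ d : ℂ, HasDerivAt f d z ∧ HasSum (fun n : ℕ => a n * (n * z ^ (n - 1))) d := by
  obtain ⟨ρ, hzρ, hρ1⟩ := exists_between hz1
  have hρ0 : 0 < ρ := (norm_nonneg z).trans_lt hzρ
  have hs : Summable (fun n : ℕ => (n : ℝ) * ρ ^ (n - 1)) := by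
    have h := (hasSum_coe_mul_geometric_of_norm_lt_one (𝕜 := ℝ) (r := ρ)
      (by rwa [Real.norm_of_nonneg hρ0.le])).summable.mul_left ρ⁻¹
    refine h.congr fun n => ?_
    rcases n with _ | n
    · simp
    · simp only [Nat.add_sub_cancel, pow_succ]
      field_simp
  have hb : ∀ (n : ℕ) (y : ℂ), y ∈ Metric.ball (0:ℂ) ρ →
      ‖a n * (n * y ^ (n - 1))‖ ≤ (n : ℝ) * ρ ^ (n - 1) := by
    intro n y hy
    have hy' : ‖y‖ ≤ ρ := by simpa using (Metric.mem_ball.1 hy).le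
    rw [norm_mul, norm_mul, norm_pow, Complex.norm_natCast]
    calc ‖a n‖ * (n * ‖y‖ ^ (n - 1)) ≤ 1 * (n * ρ ^ (n - 1)) := by
          gcongr
          exact hA n
      _ = _ := one_mul _
  have hzmem : z ∈ Metric.ball (0:ℂ) ρ := by simpa using hzρ
  have h := hasDerivAt_tsum_of_isPreconnected hs Metric.isOpen_ball
    (convex_ball (0:ℂ) ρ).isPreconnected
    (g := fun (n : ℕ) (y : ℂ) => a n * y ^ n)
    (fun n y _ => (hasDerivAt_pow n y).const_mul (a n)) hb
    (Metric.mem_ball_self hρ0) (hf 0 (by simp)).summable hzmem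
  refine ⟨_, h.congr_of_eventuallyEq ?_,
    (Summable.of_norm_bounded hs fun n => hb n z hzmem).hasSum⟩
  filter_upwards [Metric.isOpen_ball.mem_nhds hzmem] with y hy
  exact (hf y (Metric.ball_subset_ball hρ1.le hy)).tsum_eq.symm

/-- For `f z = z (1 + u z)` the two quantities bounded here are `u` and `u - z u'`. -/
lemma series_bounds (f : ℂ → ℂ) (a : ℕ → ℂ)
    (ha0 : a 0 = 0) (ha1 : a 1 = 1)
    (hf : ∀ z ∈ Metric.ball (0:ℂ) 1, HasSum (fun n : ℕ => a n * z ^ n) (f z))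
    (hA : ∀ n : ℕ, 2 ≤ n → ‖a n‖ ≤ 1) (z : ℂ) (hz0 : 0 < ‖z‖) (hz1 : ‖z‖ < 1) :
    ∃ d : ℂ, HasDerivAt f d z ∧ ‖f z / z - 1‖ ≤ ‖z‖ / (1 - ‖z‖) ∧
      ‖2 * (f z / z) - 1 - d‖ ≤ (‖z‖ / (1 - ‖z‖)) ^ 2 := by
  have hA' : ∀ n : ℕ, ‖a n‖ ≤ 1 := by
    intro n
    rcases n with _ | _ | n
    · simp [ha0]
    · simp [ha1]
    · exact hA _ (by omega)
  have hzne : z ≠ 0 := norm_pos_iff.1 hz0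
  have h1r : (1 - ‖z‖) ≠ 0 := by linarith
  obtain ⟨d, hd, hds⟩ := hasDerivAt_series f a hf hA' z hz1
  have hfz := hf z (by simpa using hz1)
  have hf2 := (hasSum_nat_add_iff' 2).2 hfz
  have hd2 := (hasSum_nat_add_iff' 2).2 hds
  simp only [Finset.sum_range_succ, Finset.sum_range_zero, ha0, ha1] at hf2 hd2
  norm_num at hf2 hd2
  refine ⟨d, hd, ?_, ?_⟩
  · have hs : HasSum (fun n : ℕ => a (n + 2) * z ^ (n + 1)) (f z / z - 1) := by
      convert hf2.div_const z using 1
      · rfl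
      · funext n
        field_simp
        ring
      · field_simp
    have hg : HasSum (fun n : ℕ => ‖z‖ * ‖z‖ ^ n) (‖z‖ / (1 - ‖z‖)) := by
      rw [div_eq_mul_inv]
      exact (hasSum_geometric_of_lt_one hz0.le hz1).mul_left _
    rw [← hs.tsum_eq]
    refine tsum_of_norm_bounded hg fun n => ?_
    rw [norm_mul, norm_pow, pow_succ']
    exact mul_le_of_le_one_left (by positivity) (hA' _)
  · have hs : HasSum (fun n : ℕ => -(a (n + 2) * (n * z ^ (n + 1)))) (2 * (f z / z) - 1 - d) := by
      convert ((hf2.div_const z).mul_left 2).sub hd2 using 1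
      · rfl
      · funext n
        field_simp
        ring
      · field_simp
        ring
    have hg : HasSum (fun n : ℕ => ‖z‖ * (n * ‖z‖ ^ n)) ((‖z‖ / (1 - ‖z‖)) ^ 2) := by
      convert (hasSum_coe_mul_geometric_of_norm_lt_one (𝕜 := ℝ) (r := ‖z‖)
        (by rwa [norm_norm])).mul_left ‖z‖ using 1
      · rfl
      · rw [div_pow, sq ‖z‖, mul_div_assoc]
    rw [← hs.tsum_eq]
    refine tsum_of_norm_bounded hg fun n => ?_
    rw [norm_neg, norm_mul, norm_mul, norm_pow, Complex.norm_natCast]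
    calc ‖a (n + 2)‖ * (n * ‖z‖ ^ (n + 1)) ≤ n * ‖z‖ ^ (n + 1) :=
          mul_le_of_le_one_left (by positivity) (hA' _)
      _ = _ := by ring

theorem radius_univalence_coeff_one_one
    (f g F : ℂ → ℂ) (a b : ℕ → ℂ)
    (hfa : AnalyticOnNhd ℂ f (Metric.ball (0:ℂ) 1))
    (hga : AnalyticOnNhd ℂ g (Metric.ball (0:ℂ) 1))
    (ha0 : a 0 = 0) (ha1 : a 1 = 1) (hb0 : b 0 = 0) (hb1 : b 1 = 1)
    (hf : ∀ z ∈ Metric.ball (0:ℂ) 1, HasSum (fun n : ℕ => a n * z ^ n) (f z))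
    (hg : ∀ z ∈ Metric.ball (0:ℂ) 1, HasSum (fun n : ℕ => b n * z ^ n) (g z))
    (hfne : ∀ z : ℂ, 0 < ‖z‖ → ‖z‖ < 1 → f z ≠ 0)
    (hgne : ∀ z : ℂ, 0 < ‖z‖ → ‖z‖ < 1 → g z ≠ 0)
    (hA : ∀ n : ℕ, 2 ≤ n → ‖a n‖ ≤ 1)
    (hB : ∀ n : ℕ, 2 ≤ n → ‖b n‖ ≤ 1)
    (hF : ∀ z : ℂ, F z = z ^ 3 / (f z * g z)) :
    ∀ z : ℂ, 0 < ‖z‖ → ‖z‖ < 1 / 3 →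
      ‖deriv F z * (z / F z) ^ 2 - 1‖ < 1 := by
  intro z hz0 hz3
  have hz1 : ‖z‖ < 1 := by linarith
  have hzne : z ≠ 0 := norm_pos_iff.1 hz0
  have hfz := hfne z hz0 hz1
  have hgz := hgne z hz0 hz1
  obtain ⟨d, hd, hu, hAu⟩ := series_bounds f a ha0 ha1 hf hA z hz0 hz1
  obtain ⟨e, he, hv, hBv⟩ := series_bounds g b hb0 hb1 hg hB z hz0 hz1
  have hdF : deriv F z =
      (3 * z ^ 2 * (f z * g z) - z ^ 3 * (d * g z + f z * e)) / (f z * g z) ^ 2 := by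
    have hFe : F = fun z => z ^ 3 / (f z * g z) := funext hF
    rw [hFe]
    have h := (hasDerivAt_pow 3 z).fun_div (hd.fun_mul he) (mul_ne_zero hfz hgz)
    simpa using h.deriv
  set s := ‖z‖ / (1 - ‖z‖) with hs
  have hs0 : 0 ≤ s := div_nonneg hz0.le (by linarith)
  have hs2 : s < 1 / 2 := by
    rw [hs, div_lt_iff₀ (by linarith)]
    linarith
  have key : deriv F z * (z / F z) ^ 2 - 1 =
      (2 * (f z / z) - 1 - d) + (2 * (g z / z) - 1 - e) - (f z / z - 1) * (g z / z - 1)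
        + (2 * (f z / z) - 1 - d) * (g z / z - 1) + (2 * (g z / z) - 1 - e) * (f z / z - 1) := by
    rw [hdF, hF]
    field_simp
    ring
  rw [key]
  generalize f z / z - 1 = u at *
  generalize g z / z - 1 = v at *
  generalize 2 * (f z / z) - 1 - d = A at *
  generalize 2 * (g z / z) - 1 - e = B at *
  have h1 : ‖A + B - u * v + A * v + B * u‖
      ≤ ‖A‖ + ‖B‖ + ‖u‖ * ‖v‖ + ‖A‖ * ‖v‖ + ‖B‖ * ‖u‖ := by
    simp only [← norm_mul]
    refine (norm_add_le _ _).trans (add_le_add_left ?_ _)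
    refine (norm_add_le _ _).trans (add_le_add_left ?_ _)
    refine (norm_sub_le _ _).trans (add_le_add_left ?_ _)
    exact norm_add_le _ _
  calc ‖A + B - u * v + A * v + B * u‖
      ≤ ‖A‖ + ‖B‖ + ‖u‖ * ‖v‖ + ‖A‖ * ‖v‖ + ‖B‖ * ‖u‖ := h1
    _ ≤ s ^ 2 + s ^ 2 + s * s + s ^ 2 * s + s ^ 2 * s := by gcongr
    _ = 3 * s ^ 2 + 2 * s ^ 3 := by ring
    _ < 3 * (1 / 2) ^ 2 + 2 * (1 / 2) ^ 3 := by gcongr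
    _ = 1 := by norm_num
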